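/- There exists a constant c such that for every natural number n, every binary string x of length n, and every finite nonempty set S of binary strings with x ∈ S and C(S) ≤ n, the time-bounded complexity satisfies C^{B(C(S) + c·log(n+2))}(x) ≤ C(S) + log|S| + c·log(n+2). (A two-part description based on a model S of complexity k can be converted into a program of essentially the same total length that halts within time B(k + O(log n)).) -/

import Mathlib

open scoped Classical

/-- Binary strings: finite sequences over `{0,1}`. -/
abbrev BStr := List Bool

/-- Complexity of `x` with respect to the description method `D`:
the minimal length of a `p` with `D(p) = x`, as an extended natural
(`⊤` if no such `p` exists). -/
noncomputable def Cw (D : BStr →. BStr) (x : BStr) : ℕ∞ :=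
  ⨅ (p : BStr) (_ : x ∈ D p), (p.length : ℕ∞)

/-- A description method is optimal if it is partial computable and gives
complexity at most that of any other partial computable description method,
up to an additive constant. -/
def OptimalDM (D : BStr →. BStr) : Prop :=
  Partrec D ∧ ∀ D' : BStr →. BStr, Partrec D' →
    ∃ c : ℕ, ∀ x : BStr, Cw D x ≤ Cw D' x + (c : ℕ∞)

/-- Plain Kolmogorov complexity (finite value) w.r.t. a description method. -/
noncomputable def C (D : BStr →. BStr) (x : BStr) : ℕ := (Cw D x).toNat

/-- Conditional complexity of `x` given `y` w.r.t. the conditional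
description method `E`. -/
noncomputable def CwCond (E : BStr → BStr →. BStr) (x y : BStr) : ℕ∞ :=
  ⨅ (p : BStr) (_ : x ∈ E p y), (p.length : ℕ∞)

/-- Optimal conditional description method. -/
def OptimalCDM (E : BStr → BStr →. BStr) : Prop :=
  Partrec₂ E ∧ ∀ E' : BStr → BStr →. BStr, Partrec₂ E' →
    ∃ c : ℕ, ∀ x y : BStr, CwCond E x y ≤ CwCond E' x y + (c : ℕ∞)

/-- Conditional Kolmogorov complexity (finite value). -/
noncomputable def Ccond (E : BStr → BStr →. BStr) (x y : BStr) : ℕ :=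
  (CwCond E x y).toNat

/-- `enc` is a computable injective encoding of finite sets of binary strings
as binary strings (computability is expressed on the level of lists of
elements, since every finite set is the set of members of a list). -/
def SetEncoding (enc : Finset BStr → BStr) : Prop :=
  Function.Injective enc ∧ Computable (fun l : List BStr => enc l.toFinset)

/-- A computable step-counting semantics for the description method `D`:
`ev t p` is the output of `D` on program `p` within `t` computation steps
(`none` if the computation has not converged within `t` steps). -/
structure TimedDM (D : BStr →. BStr) where
  ev : ℕ → BStr → Option BStr
  computable : Computable₂ ev
  mono : ∀ {t t' : ℕ} {p y : BStr}, t ≤ t' → ev t p = some y → ev t' p = some y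
  spec : ∀ p y : BStr, y ∈ D p ↔ ∃ t : ℕ, ev t p = some y

/-- Time-bounded complexity `C^t(x)`: the minimal length of a program
producing `x` within `t` steps (`⊤` if there is none). -/
noncomputable def Cwt (ev : ℕ → BStr → Option BStr) (t : ℕ) (x : BStr) : ℕ∞ :=
  ⨅ (p : BStr) (_ : ev t p = some x), (p.length : ℕ∞)

/-- `B D k`: the largest natural number whose binary representation has
complexity at most `k` (naturals are identified with their binary
representations via `Nat.bits`). -/
noncomputable def B (D : BStr →. BStr) (k : ℕ) : ℕ :=
  sSup {m : ℕ | Cw D (Nat.bits m) ≤ (k : ℕ∞)}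

/-- Kolmogorov's `(α,β)`-stochasticity: `x` belongs to a finite set `S` of
complexity at most `α` in which it is random up to `β`. -/
def Stochastic (D : BStr →. BStr) (enc : Finset BStr → BStr)
    (α β : ℕ) (x : BStr) : Prop :=
  ∃ S : Finset BStr, x ∈ S ∧ C D (enc S) ≤ α ∧
    Real.logb 2 S.card - β ≤ (C D x : ℝ)

/-- The binary entropy function (with the convention `H(0) = H(1) = 0`,
which holds automatically since `logb 2 0 = 0` in Mathlib). -/
noncomputable def binH (p : ℝ) : ℝ :=
  -(p * Real.logb 2 p) - (1 - p) * Real.logb 2 (1 - p)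

/-- Unbounded search for a witness of a computable predicate. -/
theorem search_partrec {α β : Type} [Primcodable α] [Primcodable β] (P : α → β → Bool)
    (hP : Computable₂ P) : ∃ f : α →. β, Partrec f ∧ (∀ a b, b ∈ f a → P a b = true) ∧
      ∀ a b, P a b = true → ∃ b', b' ∈ f a := by
  let g : α → ℕ → Option β := fun a n =>
    (Encodable.decode (α := β) n).bind (fun b => bif P a b then some b else none)
  have hg : Computable₂ g := by
    refine Computable.option_bind (Computable.decode.comp Computable.snd) ?_
    refine Computable.cond ?_ (Computable.option_some.comp Computable.snd) (Computable.const none)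
    exact hP.comp (Computable.fst.comp Computable.fst) Computable.snd
  refine ⟨fun a => Nat.rfindOpt (g a), Partrec.rfindOpt hg, ?_, ?_⟩
  · intro a b hb
    obtain ⟨n, hn⟩ := Nat.rfindOpt_spec hb
    simp only [g, Option.mem_def, Option.bind_eq_some_iff] at hn
    obtain ⟨b', -, h⟩ := hn
    cases hPb : P a b' with
    | false => simp [hPb] at h
    | true =>
      simp [hPb] at h
      rw [← h, hPb]
  · intro a b hb
    have : (Nat.rfindOpt (g a)).Dom := by
      refine Nat.rfindOpt_dom.2 ⟨Encodable.encode b, b, ?_⟩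
      simp [g, hb]
    exact ⟨_, Part.get_mem this⟩

/-- Unary strings. -/
def ones (n : ℕ) : BStr := Nat.rec [] (fun _ r => true :: r) n

theorem ones_primrec : Primrec ones := by
  refine Primrec.nat_rec₁ (f := fun _ r => true :: r) [] ?_
  exact Primrec.list_cons.comp (Primrec.const true) Primrec.snd

theorem ones_length (n : ℕ) : (ones n).length = n := by
  induction n with
  | zero => rfl
  | succ n ih =>
    change (true :: ones n).length = n + 1
    simp [ih]

theorem ones_bits (n : ℕ) : ∃ m, n ≤ m ∧ Nat.bits m = ones n := by
  induction n with
  | zero => exact ⟨0, le_rfl, by simp [ones]⟩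
  | succ n ih =>
    obtain ⟨m, hm, h⟩ := ih
    refine ⟨2 * m + 1, by omega, ?_⟩
    rw [Nat.bit1_bits, h]
    rfl

theorem ones_inj (m n : ℕ) (r r' : BStr) (h : ones m ++ false :: r = ones n ++ false :: r') :
    m = n ∧ r = r' := by
  induction m generalizing n with
  | zero =>
    cases n with
    | zero => simpa [ones] using h
    | succ n => simp [ones] at h
  | succ m ih =>
    cases n with
    | zero => simp [ones] at h
    | succ n =>
      change true :: (ones m ++ false :: r) = true :: (ones n ++ false :: r') at h
      simp only [List.cons.injEq, true_and] at h
      have := ih n h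
      exact ⟨by omega, this.2⟩

/-- Powers of two. -/
def ptwo (n : ℕ) : ℕ := Nat.rec 1 (fun _ r => 2 * r) n

theorem ptwo_primrec : Primrec ptwo := by
  refine Primrec.nat_rec₁ (f := fun _ r => 2 * r) 1 ?_
  exact Primrec.nat_mul.comp (Primrec.const 2) Primrec.snd

theorem ptwo_eq (n : ℕ) : ptwo n = 2 ^ n := by
  induction n with
  | zero => rfl
  | succ n ih =>
    change 2 * ptwo n = _
    rw [ih, pow_succ]
    ring

/-- Value of a binary string. -/
def bval (l : BStr) : ℕ := l.foldr (fun b r => 2 * r + b.toNat) 0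

theorem bval_primrec : Primrec bval := by
  refine Primrec.list_foldr (f := fun l : BStr => l) (g := fun _ => 0)
    (h := fun _ (p : Bool × ℕ) => 2 * p.2 + p.1.toNat) Primrec.id (Primrec.const 0) ?_
  refine Primrec.nat_add.comp ?_ ?_
  · exact Primrec.nat_mul.comp (Primrec.const 2) (Primrec.snd.comp Primrec.snd)
  · exact (Primrec.dom_bool Bool.toNat).comp (Primrec.fst.comp Primrec.snd)

theorem bval_bits (n : ℕ) : bval (Nat.bits n) = n := by
  induction n using Nat.binaryRec' with
  | zero => simp [bval]
  | bit b n h ih =>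
    rw [Nat.bits_append_bit n b h]
    change 2 * bval n.bits + b.toNat = _
    rw [ih, Nat.bit_val]

/-- Removing duplicates. -/
def dd (l : List BStr) : List BStr :=
  l.foldr (fun a r => if @List.idxOf BStr instBEqOfDecidableEq a r < r.length then r else a :: r) []

theorem dd_primrec : Primrec dd := by
  refine Primrec.list_foldr (f := fun l : List BStr => l) (g := fun _ => [])
    (h := fun _ (p : BStr × List BStr) =>
      if @List.idxOf BStr instBEqOfDecidableEq p.1 p.2 < p.2.length then p.2 else p.1 :: p.2) Primrec.id (Primrec.const []) ?_
  have h1 : Primrec (fun z : List BStr × (BStr × List BStr) => z.2.1) :=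
    Primrec.fst.comp Primrec.snd
  have h2 : Primrec (fun z : List BStr × (BStr × List BStr) => z.2.2) :=
    Primrec.snd.comp Primrec.snd
  refine Primrec.ite ?_ h2 (Primrec.list_cons.comp h1 h2)
  exact Primrec.nat_lt.comp (Primrec.list_idxOf.comp h1 h2) (Primrec.list_length.comp h2)

theorem dd_spec (l : List BStr) : (dd l).Nodup ∧ ∀ a, a ∈ dd l ↔ a ∈ l := by
  induction l with
  | nil => simp [dd]
  | cons b l ih =>
    have e : dd (b :: l) = if @List.idxOf BStr instBEqOfDecidableEq b (dd l) < (dd l).length then dd l else b :: dd l := rfl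
    have hiff : @List.idxOf BStr instBEqOfDecidableEq b (dd l) < (dd l).length ↔ b ∈ dd l :=
      @List.idxOf_lt_length_iff BStr instBEqOfDecidableEq _ _ _
    rw [e]
    by_cases h : b ∈ dd l
    · rw [if_pos (hiff.2 h)]
      refine ⟨ih.1, fun a => ?_⟩
      rw [ih.2]
      have := (ih.2 b).1 h
      constructor
      · exact List.mem_cons_of_mem _
      · intro h'
        rcases List.mem_cons.1 h' with rfl | h'
        · exact this
        · exact h'
    · rw [if_neg (fun h' => h (hiff.1 h'))]
      exact ⟨List.nodup_cons.2 ⟨h, ih.1⟩, fun a => by simp [ih.2]⟩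

theorem eq_computable {α β : Type} [Primcodable α] [Primcodable β] [DecidableEq β] {f g : α → β}
    (hf : Computable f) (hg : Computable g) : Computable (fun a => decide (f a = g a)) :=
  (Primrec.eq (α := β)).decide.to_comp.comp hf hg

theorem le_computable {α : Type} [Primcodable α] {f g : α → ℕ}
    (hf : Computable f) (hg : Computable g) : Computable (fun a => decide (f a ≤ g a)) :=
  Primrec.nat_le.decide.to_comp.comp hf hg

theorem and_computable {α : Type} [Primcodable α] {f g : α → Bool}
    (hf : Computable f) (hg : Computable g) : Computable (fun a => f a && g a) :=
  (Primrec.dom_bool₂ and).to_comp.comp hf hg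

theorem add_computable {α : Type} [Primcodable α] {f g : α → ℕ}
    (hf : Computable f) (hg : Computable g) : Computable (fun a => f a + g a) :=
  Primrec.nat_add.to_comp.comp hf hg

/-- Short programs exist. -/
theorem Cw_le_iff (D : BStr →. BStr) (x : BStr) (k : ℕ) :
    Cw D x ≤ k ↔ ∃ p, x ∈ D p ∧ p.length ≤ k := by
  constructor
  · intro h
    by_contra! hc
    have : ((k + 1 : ℕ) : ℕ∞) ≤ Cw D x := by
      refine le_iInf fun p => le_iInf fun hp => ?_
      exact_mod_cast hc p hp
    have := this.trans h
    norm_cast at this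
    omega
  · rintro ⟨p, hp, hk⟩
    refine (iInf₂_le p hp).trans ?_
    exact_mod_cast hk

theorem le_B (D : BStr →. BStr) (k m : ℕ) (h : Cw D (Nat.bits m) ≤ k) : m ≤ B D k := by
  refine le_csSup ?_ h
  refine Set.Finite.bddAbove ?_
  have hf : {p : BStr | p.length ≤ k}.Finite := List.finite_length_le Bool k
  have hg : (⋃ p ∈ {p : BStr | p.length ≤ k}, {m : ℕ | Nat.bits m ∈ D p}).Finite := by
    refine hf.biUnion fun p _ => ?_
    refine Set.Subsingleton.finite ?_
    intro a ha b hb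
    have := Part.mem_unique ha hb
    rw [← bval_bits a, this, bval_bits]
  refine hg.subset ?_
  intro m hm
  obtain ⟨p, hp, hk⟩ := (Cw_le_iff D _ k).1 hm
  simp only [Set.mem_iUnion]
  exact ⟨p, hk, hp⟩

/-- Stage 1: from a program for (the code of) `S` to a duplicate-free list of elements. -/
theorem listing (D : BStr →. BStr) (T : TimedDM D)
    (enc : Finset BStr → BStr) (henc : SetEncoding enc) :
    ∃ F : BStr →. List BStr, Partrec F ∧ ∀ q (S : Finset BStr), enc S ∈ D q →
      ∃ l, l ∈ F q ∧ l.Nodup ∧ ∀ a, a ∈ l ↔ a ∈ S := by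
  obtain ⟨f, hf, h1, h2⟩ := search_partrec
    (fun (q : BStr) (z : ℕ × List BStr) => decide (T.ev z.1 q = some (enc z.2.toFinset))) (by
      refine eq_computable ?_ ?_
      · exact T.computable.comp (Computable.fst.comp Computable.snd) Computable.fst
      · exact Computable.option_some.comp (henc.2.comp (Computable.snd.comp Computable.snd)))
  refine ⟨fun q => (f q).map (fun z => dd z.2),
    hf.map (dd_primrec.to_comp.comp (Computable.snd.comp Computable.snd)).to₂, ?_⟩
  intro q S hS
  obtain ⟨t, ht⟩ := (T.spec q _).1 hS
  obtain ⟨z, hz⟩ := h2 q (t, S.toList) (by simpa using ht)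
  refine ⟨dd z.2, Part.mem_map _ hz, (dd_spec _).1, fun a => ?_⟩
  have h3 := of_decide_eq_true (h1 q z hz)
  have h4 := (T.spec q _).2 ⟨_, h3⟩
  have h5 := henc.1 (Part.mem_unique h4 hS)
  rw [(dd_spec _).2, ← h5, List.mem_toFinset]

/-- Stage 2: the two-part description method. -/
theorem twopart (F : BStr →. List BStr) (hF : Partrec F) :
    ∃ D' : BStr →. BStr, Partrec D' ∧ ∀ (q : BStr) (l : List BStr) (j : ℕ) (y : BStr),
      l ∈ F q → l[j]? = some y → ∃ w, y ∈ D' w ∧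
        w.length = q.length + 2 * Nat.size q.length + Nat.size j + 1 := by
  have c1 : Computable (fun z : BStr × (BStr × BStr × BStr) => z.2.1) :=
    Computable.fst.comp Computable.snd
  have c2 : Computable (fun z : BStr × (BStr × BStr × BStr) => z.2.2.1) :=
    Computable.fst.comp (Computable.snd.comp Computable.snd)
  have c3 : Computable (fun z : BStr × (BStr × BStr × BStr) => z.2.2.2) :=
    Computable.snd.comp (Computable.snd.comp Computable.snd)
  obtain ⟨f, hf, h1, h2⟩ := search_partrec
    (fun (w : BStr) (z : BStr × BStr × BStr) =>
      decide (w = ones z.1.length ++ false :: (z.1 ++ (z.2.1 ++ z.2.2))) &&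
      decide (bval z.1 = z.2.1.length)) (by
      refine and_computable (eq_computable Computable.fst ?_) (eq_computable ?_ ?_)
      · refine Computable.list_append.comp (ones_primrec.to_comp.comp (Computable.list_length.comp c1)) ?_
        refine Computable.list_cons.comp (Computable.const false) ?_
        exact Computable.list_append.comp c1 (Computable.list_append.comp c2 c3)
      · exact bval_primrec.to_comp.comp c1
      · exact Computable.list_length.comp c2)
  refine ⟨fun w => (f w).bind fun z => (F z.2.1).bind fun l =>
    ((l[bval z.2.2]? : Option BStr) : Part BStr), ?_, ?_⟩
  · refine hf.bind ?_
    refine Partrec.bind (hF.comp c2) ?_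
    refine Computable.ofOption ?_
    exact Computable.list_getElem?.comp Computable.snd
      (bval_primrec.to_comp.comp (c3.comp Computable.fst))
  · intro q l j y hl hy
    refine ⟨ones (Nat.bits q.length).length ++ false :: (Nat.bits q.length ++ (q ++ Nat.bits j)),
      ?_, ?_⟩
    · obtain ⟨z, hz⟩ := h2 (ones (Nat.bits q.length).length ++
        false :: (Nat.bits q.length ++ (q ++ Nat.bits j)))
        (Nat.bits q.length, q, Nat.bits j) (by simp [bval_bits])
      have h3 := h1 _ _ hz
      simp only [Bool.and_eq_true, decide_eq_true_eq] at h3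
      obtain ⟨h3, h4⟩ := h3
      obtain ⟨h5, h6⟩ := ones_inj _ _ _ _ h3
      obtain ⟨h7, h8⟩ := List.append_inj h6 h5
      rw [← h7, bval_bits] at h4
      obtain ⟨h9, h10⟩ := List.append_inj h8 h4
      refine Part.mem_bind hz (Part.mem_bind (a := l) ?_ ?_)
      · rw [← h9]; exact hl
      · rw [← h10, bval_bits]
        simpa using hy
    · simp only [List.length_append, List.length_cons, ones_length, Nat.size_eq_bits_len]
      ring

/-- Bounded verification that all elements of `l` have short fast programs. -/
def chk (ev : ℕ → BStr → Option BStr) (t : ℕ) (ps l : List BStr) (bd m : ℕ) : Bool :=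
  Nat.rec true (fun i r => r && (decide (ev t (ps[i]?.getD []) = l[i]?) &&
    decide ((ps[i]?.getD []).length ≤ bd))) m

theorem chk_iff (ev : ℕ → BStr → Option BStr) (t : ℕ) (ps l : List BStr) (bd m : ℕ) :
    chk ev t ps l bd m = true ↔ ∀ i < m, ev t (ps[i]?.getD []) = l[i]? ∧
      (ps[i]?.getD []).length ≤ bd := by
  induction m with
  | zero => simp [chk]
  | succ m ih =>
    have e : chk ev t ps l bd (m + 1) = (chk ev t ps l bd m &&
      (decide (ev t (ps[m]?.getD []) = l[m]?) && decide ((ps[m]?.getD []).length ≤ bd))) := rfl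
    rw [e, Bool.and_eq_true, ih, Bool.and_eq_true, decide_eq_true_eq, decide_eq_true_eq]
    constructor
    · rintro ⟨h1, h2⟩ i hi
      rcases Nat.lt_succ_iff_lt_or_eq.1 hi with h | rfl
      · exact h1 i h
      · exact h2
    · intro h
      exact ⟨fun i hi => h i (by omega), h m (by omega)⟩

theorem chk_computable {α : Type} [Primcodable α] (ev : ℕ → BStr → Option BStr)
    (hev : Computable₂ ev) {t bd m : α → ℕ} {ps l : α → List BStr} (ht : Computable t)
    (hps : Computable ps) (hl : Computable l) (hbd : Computable bd) (hm : Computable m) :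
    Computable (fun a => chk ev (t a) (ps a) (l a) (bd a) (m a)) := by
  refine Computable.nat_rec (f := m) (g := fun _ => true) (h := fun a (z : ℕ × Bool) =>
    z.2 && (decide (ev (t a) ((ps a)[z.1]?.getD []) = (l a)[z.1]?) &&
    decide (((ps a)[z.1]?.getD []).length ≤ bd a))) hm (Computable.const true) ?_
  have ci : Computable (fun z : α × (ℕ × Bool) => z.2.1) := Computable.fst.comp Computable.snd
  have cr : Computable (fun z : α × (ℕ × Bool) => z.2.2) := Computable.snd.comp Computable.snd
  have cp : Computable (fun z : α × (ℕ × Bool) => (ps z.1)[z.2.1]?.getD []) :=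
    Computable.option_getD (Computable.list_getElem?.comp (hps.comp Computable.fst) ci)
      (Computable.const [])
  refine and_computable cr (and_computable (eq_computable ?_ ?_) (le_computable ?_ ?_))
  · exact hev.comp (ht.comp Computable.fst) cp
  · exact Computable.list_getElem?.comp (hl.comp Computable.fst) ci
  · exact Computable.list_length.comp cp
  · exact hbd.comp Computable.fst

/-- Stage 3: from a program for `S` to a time bound sufficient for all elements of `S`. -/
theorem timebound (F : BStr →. List BStr) (hF : Partrec F) (ev : ℕ → BStr → Option BStr)
    (hev : Computable₂ ev) (c0 : ℕ) :
    ∃ D'' : BStr →. BStr, Partrec D'' ∧ ∀ (q : BStr) (l : List BStr), l ∈ F q →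
      (∃ t ps a b, chk ev t ps l (q.length + 2 * a + b + c0) l.length = true ∧
        2 ^ a ≤ 2 * (q.length + 1) ∧ 2 ^ b ≤ 2 * l.length) →
      ∃ t ps a b, chk ev t ps l (q.length + 2 * a + b + c0) l.length = true ∧
        2 ^ a ≤ 2 * (q.length + 1) ∧ 2 ^ b ≤ 2 * l.length ∧ ones t ∈ D'' q := by
  let α := (BStr × List BStr) × (ℕ × List BStr × ℕ × ℕ)
  have cq : Computable (fun z : α => z.1.1.length) :=
    Computable.list_length.comp (Computable.fst.comp Computable.fst)
  have cl : Computable (fun z : α => z.1.2) := Computable.snd.comp Computable.fst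
  have ct : Computable (fun z : α => z.2.1) := Computable.fst.comp Computable.snd
  have cps : Computable (fun z : α => z.2.2.1) :=
    Computable.fst.comp (Computable.snd.comp Computable.snd)
  have ca : Computable (fun z : α => z.2.2.2.1) :=
    Computable.fst.comp (Computable.snd.comp (Computable.snd.comp Computable.snd))
  have cb : Computable (fun z : α => z.2.2.2.2) :=
    Computable.snd.comp (Computable.snd.comp (Computable.snd.comp Computable.snd))
  have dbl : ∀ {f : α → ℕ}, Computable f → Computable (fun a => 2 * f a) := fun hf =>
    Primrec.nat_mul.to_comp.comp (Computable.const 2) hf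
  obtain ⟨f, hf, h1, h2⟩ := search_partrec
    (fun (y : BStr × List BStr) (z : ℕ × List BStr × ℕ × ℕ) =>
      chk ev z.1 z.2.1 y.2 (y.1.length + 2 * z.2.2.1 + z.2.2.2 + c0) y.2.length &&
      (decide (ptwo z.2.2.1 ≤ 2 * (y.1.length + 1)) && decide (ptwo z.2.2.2 ≤ 2 * y.2.length)))
    (by
      refine and_computable (chk_computable (α := α) ev hev ct cps cl ?_
        (Computable.list_length.comp cl))
        (and_computable (le_computable ?_ ?_) (le_computable ?_ ?_))
      · exact add_computable (add_computable (add_computable cq (dbl ca)) cb) (Computable.const c0)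
      · exact ptwo_primrec.to_comp.comp ca
      · exact dbl (add_computable cq (Computable.const 1))
      · exact ptwo_primrec.to_comp.comp cb
      · exact dbl (Computable.list_length.comp cl))
  refine ⟨fun q => (F q).bind fun l => (f (q, l)).map fun z => ones z.1, ?_, ?_⟩
  · refine hF.bind ?_
    refine Partrec.map (hf.comp (Computable.fst.pair Computable.snd)) ?_
    exact ones_primrec.to_comp.comp (Computable.fst.comp Computable.snd)
  · rintro q l hl ⟨t, ps, a, b, hc, ha, hb⟩
    obtain ⟨z, hz⟩ := h2 (q, l) (t, ps, a, b) (by simp [hc, ptwo_eq, ha, hb])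
    have h3 := h1 _ _ hz
    simp only [Bool.and_eq_true, decide_eq_true_eq, ptwo_eq] at h3
    exact ⟨z.1, z.2.1, z.2.2.1, z.2.2.2, h3.1, h3.2.1, h3.2.2,
      Part.mem_bind hl (Part.mem_map _ hz)⟩

theorem two_pow_size (k : ℕ) : 2 ^ Nat.size k ≤ 2 * (k + 1) := by
  rcases Nat.eq_zero_or_pos (Nat.size k) with h | h
  · rw [h]; omega
  · have := (Nat.lt_size (m := Nat.size k - 1) (n := k)).1 (by omega)
    have e : Nat.size k = (Nat.size k - 1) + 1 := by omega
    rw [e, pow_succ]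
    omega

theorem two_pow_size' (k : ℕ) (hk : 0 < k) : 2 ^ Nat.size k ≤ 2 * k := by
  have h : 0 < Nat.size k := Nat.size_pos.2 hk
  have := (Nat.lt_size (m := Nat.size k - 1) (n := k)).1 (by omega)
  have e : Nat.size k = (Nat.size k - 1) + 1 := by omega
  rw [e, pow_succ]
  omega

theorem le_logb (a : ℕ) (s : ℝ) (h : (2 : ℝ) ^ a ≤ 2 * s) : (a : ℝ) ≤ 1 + Real.logb 2 s := by
  have hs : 0 < s := by
    have : (0 : ℝ) < 2 ^ a := by positivity
    linarith
  have h1 : Real.logb 2 ((2 : ℝ) ^ a) ≤ Real.logb 2 (2 * s) :=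
    Real.logb_le_logb_of_le (by norm_num) (by positivity) h
  rw [Real.logb_pow, Real.logb_mul (by norm_num) hs.ne', Real.logb_self_eq_one (by norm_num)] at h1
  linarith

/-- A two-part description based on a model `S` of complexity `k` can be
converted into a program of essentially the same total length that halts
within time `B(k + O(log n))`. -/
theorem stmt1 (D : BStr →. BStr) (hD : OptimalDM D) (T : TimedDM D)
    (enc : Finset BStr → BStr) (henc : SetEncoding enc) :
    ∃ c : ℕ, 0 < c ∧ ∀ n : ℕ, ∀ x : BStr, x.length = n →
      ∀ S : Finset BStr, x ∈ S → C D (enc S) ≤ n →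
      ∃ p : BStr,
        T.ev (B D (C D (enc S) + ⌈(c : ℝ) * Real.logb 2 ((n : ℝ) + 2)⌉₊)) p = some x ∧
        (p.length : ℝ) ≤ (C D (enc S) : ℝ) + Real.logb 2 (S.card : ℝ)
          + (c : ℝ) * Real.logb 2 ((n : ℝ) + 2) := by
  obtain ⟨F, hF, hFs⟩ := listing D T enc henc
  obtain ⟨D', hD', hD's⟩ := twopart F hF
  obtain ⟨c0, hc0⟩ := hD.2 D' hD'
  obtain ⟨D'', hD'', hD''s⟩ := timebound F hF T.ev T.computable (c0 + 1)
  obtain ⟨c1, hc1⟩ := hD.2 D'' hD''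
  obtain ⟨c2, hc2⟩ := hD.2 (fun w => Part.some w) Partrec.some
  refine ⟨c0 + c1 + 10, by omega, ?_⟩
  intro n x hx S hxS hk
  -- a shortest program for `S`
  have hfin : Cw D (enc S) ≠ ⊤ := by
    have h1 : Cw (fun w => Part.some w) (enc S) ≤ ((enc S).length : ℕ) :=
      (Cw_le_iff _ _ _).2 ⟨enc S, Part.mem_some _, le_rfl⟩
    have h2 : Cw D (enc S) ≤ (((enc S).length + c2 : ℕ) : ℕ∞) := by
      refine (hc2 _).trans ?_
      push_cast
      gcongr
    exact ne_top_of_le_ne_top (ENat.natCast_ne_top _) h2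
  have hcoe : ((C D (enc S) : ℕ) : ℕ∞) = Cw D (enc S) := ENat.natCast_toNat hfin
  obtain ⟨q, hq, hqk⟩ := (Cw_le_iff D (enc S) (C D (enc S))).1 hcoe.ge
  generalize hkk : C D (enc S) = k at *
  obtain ⟨l, hl, hnd, hmem⟩ := hFs q S hq
  have hcard : l.length = S.card := by
    have : l.toFinset = S := by
      ext a
      rw [List.mem_toFinset, hmem]
    rw [← this, List.toFinset_card_of_nodup hnd]
  have hpos : 0 < l.length := List.length_pos_of_mem ((hmem x).2 hxS)
  -- every element has a short program
  have hprog : ∀ j : ℕ, ∃ p t, j < l.length → T.ev t p = l[j]? ∧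
      p.length ≤ q.length + 2 * Nat.size q.length + Nat.size l.length + (c0 + 1) := by
    intro j
    by_cases hj : j < l.length
    · obtain ⟨w, hw, hwl⟩ := hD's q l j l[j] hl (List.getElem?_eq_getElem hj)
      have h1 : Cw D l[j] ≤ ((w.length + c0 : ℕ) : ℕ∞) := by
        refine (hc0 _).trans ?_
        push_cast
        gcongr
        exact (Cw_le_iff _ _ _).2 ⟨w, hw, le_rfl⟩
      obtain ⟨p, hp, hpl⟩ := (Cw_le_iff _ _ _).1 h1
      obtain ⟨t, ht⟩ := (T.spec _ _).1 hp
      refine ⟨p, t, fun _ => ⟨by rw [ht, List.getElem?_eq_getElem hj], ?_⟩⟩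
      have := Nat.size_le_size hj.le
      omega
    · exact ⟨[], 0, fun h => absurd h hj⟩
  choose P τ hPτ using hprog
  obtain ⟨t, ps, a, b, hchk, ha, hb, ht⟩ := hD''s q l hl
    ⟨∑ i ∈ Finset.range l.length, τ i, (List.range l.length).map P, Nat.size q.length,
      Nat.size l.length, by
        rw [chk_iff]
        intro i hi
        obtain ⟨h1, h2⟩ := hPτ i hi
        have e : ((List.range l.length).map P)[i]?.getD [] = P i := by simp [hi]
        rw [e]
        refine ⟨?_, h2⟩
        rw [List.getElem?_eq_getElem hi] at h1 ⊢
        exact T.mono (Finset.single_le_sum (f := τ) (fun _ _ => Nat.zero_le _)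
          (Finset.mem_range.2 hi)) h1, two_pow_size _, two_pow_size' _ hpos⟩
  rw [chk_iff] at hchk
  obtain ⟨i, hi, hix⟩ := List.mem_iff_getElem.1 ((hmem x).2 hxS)
  obtain ⟨h1, h2⟩ := hchk i hi
  rw [List.getElem?_eq_getElem hi, hix] at h1
  -- the logarithm
  set L := Real.logb 2 ((n : ℝ) + 2) with hL
  have hL1 : 1 ≤ L := by
    rw [hL, Real.le_logb_iff_rpow_le (by norm_num) (by positivity)]
    simp
  have hka : Real.logb 2 ((k : ℝ) + 1) ≤ L := by
    refine Real.logb_le_logb_of_le (by norm_num) (by positivity) ?_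
    have : (k : ℝ) ≤ n := by exact_mod_cast hk
    linarith
  have ha' : (a : ℝ) ≤ 1 + Real.logb 2 ((k : ℝ) + 1) := by
    refine le_logb _ _ ?_
    have : 2 ^ a ≤ 2 * (k + 1) := by omega
    exact_mod_cast this
  have hb' : (b : ℝ) ≤ 1 + Real.logb 2 (S.card : ℝ) := by
    refine le_logb _ _ ?_
    rw [hcard] at hb
    exact_mod_cast hb
  refine ⟨ps[i]?.getD [], T.mono ?_ h1, ?_⟩
  · obtain ⟨m, htm, hm⟩ := ones_bits t
    refine htm.trans (le_B D _ m ?_)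
    rw [hm]
    refine (hc1 _).trans ?_
    have h3 : Cw D'' (ones t) ≤ (k : ℕ∞) := (Cw_le_iff _ _ _).2 ⟨q, ht, hqk⟩
    have h4 : c1 ≤ ⌈((c0 + c1 + 10 : ℕ) : ℝ) * L⌉₊ := by
      have h5 : (c1 : ℝ) ≤ ((c0 + c1 + 10 : ℕ) : ℝ) * L := by
        push_cast
        nlinarith [Nat.cast_nonneg (α := ℝ) c0, Nat.cast_nonneg (α := ℝ) c1]
      exact_mod_cast h5.trans (Nat.le_ceil _)
    rw [Nat.cast_add (R := ℕ∞)]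
    exact add_le_add h3 (Nat.cast_le.2 h4)
  · have h3 : ((ps[i]?.getD []).length : ℝ) ≤ (k : ℝ) + 2 * a + b + (c0 + 1) := by
      have : (ps[i]?.getD []).length ≤ k + 2 * a + b + (c0 + 1) := by omega
      exact_mod_cast this
    push_cast
    nlinarith [Nat.cast_nonneg (α := ℝ) c0, Nat.cast_nonneg (α := ℝ) c1,
      mul_le_mul_of_nonneg_left hL1 (Nat.cast_nonneg (α := ℝ) c0),
      mul_le_mul_of_nonneg_left hL1 (Nat.cast_nonneg (α := ℝ) c1)]
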